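/- Let n, m ∈ ℕ, ε > 0, let f : ℝⁿ × ℝ → ℝⁿ be continuously differentiable in x, let B : ℝ → ℝ^{n×m}, and set D(t) := B(t)B(t)ᵀ. Suppose ψ, ρ : ℝⁿ × ℝ → ℝ are twice continuously differentiable in x and continuously differentiable in t, ψ satisfies the Hamilton–Jacobi–Bellman equation ∂ψ/∂t + (1/2)⟨∇ψ, D(t)∇ψ⟩ + ⟨∇ψ, f(x,t)⟩ = −ε⟨D(t), Hess ψ⟩, and ρ satisfies the controlled Fokker–Planck equation ∂ρ/∂t + ∇·(ρ (f(x,t) + D(t)∇ψ)) = ε⟨D(t), Hess ρ⟩, at every (x,t). Then the Hopf–Cole transform φ̂(x,t) := ρ(x,t)·exp(−ψ(x,t)/(2ε)) satisfies the forward Kolmogorov (Fokker–Planck) equation ∂φ̂/∂t = −∇·(φ̂ f(x,t)) + ε⟨D(t), Hess φ̂⟩ at every (x,t). -/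

import Mathlib

open Matrix
open scoped BigOperators

/-- Partial derivative in the `i`-th coordinate direction of a scalar function on `ℝⁿ`. -/
noncomputable def pd {n : ℕ} (i : Fin n) (f : EuclideanSpace ℝ (Fin n) → ℝ)
    (x : EuclideanSpace ℝ (Fin n)) : ℝ :=
  fderiv ℝ f x (EuclideanSpace.single i 1)

/-!
With `c = 1 / (2 * ε)` and `η = exp (-c * ψ)`, so that `φ̂ = ρ * η`, the product and chain rules
give

* `∂φ̂/∂t = η * (∂ρ/∂t - c * ρ * ∂ψ/∂t)`,
* `∇·(φ̂ f) = φ̂ * ∇·f + η * ⟨∇ρ - c ρ ∇ψ, f⟩`,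
* `⟨D, Hess φ̂⟩ = η * (⟨D, Hess ρ⟩ - 2 c ⟨∇ρ, D∇ψ⟩ - c ρ ⟨D, Hess ψ⟩ + c² ρ ⟨∇ψ, D∇ψ⟩)`,

the symmetry of `D` being what merges the two mixed terms of the last line into one. Since
`ε * c = 1 / 2`, the forward Kolmogorov equation for `φ̂` is then `η` times the difference of the
Fokker–Planck equation for `ρ` and `c * ρ` times the Hamilton–Jacobi–Bellman equation for `ψ`.
-/

open scoped Topology

theorem isSymm_mul_transpose {ι κ R : Type*} [Fintype κ] [CommSemiring R] (A : Matrix ι κ R) :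
    (A * Aᵀ).IsSymm := by
  rw [IsSymm, transpose_mul, transpose_transpose]

theorem dotProduct_mulVec_comm_of_isSymm {ι R : Type*} [Fintype ι] [CommSemiring R]
    {A : Matrix ι ι R} (hA : A.IsSymm) (a b : ι → R) : a ⬝ᵥ A *ᵥ b = b ⬝ᵥ A *ᵥ a := by
  rw [← dotProduct_transpose_mulVec, hA.eq]

theorem differentiableAt_mulVec {ι κ X : Type*} [Finite ι] [Fintype κ] [NormedAddCommGroup X]
    [NormedSpace ℝ X] (A : Matrix ι κ ℝ) {F : X → κ → ℝ} {z : X} (hF : DifferentiableAt ℝ F z) :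
    DifferentiableAt ℝ (fun y => A *ᵥ F y) z := by
  cases nonempty_fintype ι
  exact A.mulVecLin.toContinuousLinearMap.differentiableAt.comp z hF

theorem eventually_differentiableAt {X Y : Type*} [NormedAddCommGroup X] [NormedSpace ℝ X]
    [NormedAddCommGroup Y] [NormedSpace ℝ Y] {g : X → Y} {z : X} (hg : ContDiffAt ℝ 1 g z) :
    ∀ᶠ y in 𝓝 z, DifferentiableAt ℝ g y :=
  (hg.eventually (by simp)).mono fun _ hy => hy.differentiableAt one_ne_zero

section

variable {n : ℕ} {D : Matrix (Fin n) (Fin n) ℝ}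
  {u v : EuclideanSpace ℝ (Fin n) → ℝ} {F G : EuclideanSpace ℝ (Fin n) → Fin n → ℝ}
  {x : EuclideanSpace ℝ (Fin n)}

/-- The gradient `∇u` as the plain vector of partial derivatives, so that `Matrix.mulVec` and
`dotProduct` apply to it directly. -/
noncomputable def grad (u : EuclideanSpace ℝ (Fin n) → ℝ) (x : EuclideanSpace ℝ (Fin n)) :
    Fin n → ℝ :=
  fun i => pd i u x

/-- The divergence `∇·F` of a vector field given by its coordinates. -/
noncomputable def divergence (F : EuclideanSpace ℝ (Fin n) → Fin n → ℝ)
    (x : EuclideanSpace ℝ (Fin n)) : ℝ :=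
  ∑ i, pd i (fun y => F y i) x

/-- The Frobenius pairing `⟨D, Hess u⟩` of a constant matrix with the Hessian of `u`. -/
noncomputable def hessInner (D : Matrix (Fin n) (Fin n) ℝ) (u : EuclideanSpace ℝ (Fin n) → ℝ)
    (x : EuclideanSpace ℝ (Fin n)) : ℝ :=
  ∑ i, ∑ j, D i j * pd i (pd j u) x

/-- The Hopf–Cole transform `ρ · exp(-ψ / (2ε))`. The domain is arbitrary so that the transform
applies to functions of space at a fixed time and to functions of time at a fixed point. -/
noncomputable def hopfCole {X : Type*} (ε : ℝ) (ψ ρ : X → ℝ) (z : X) : ℝ :=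
  ρ z * Real.exp (-(ψ z) / (2 * ε))

theorem pd_const_mul (i : Fin n) (c : ℝ) (u : EuclideanSpace ℝ (Fin n) → ℝ) :
    pd i (fun y => c * u y) = fun y => c * pd i u y := by
  ext y
  exact DFunLike.congr_fun (congrFun (fderiv_const_smul_field (𝕜 := ℝ) (f := u) c) y) _

theorem pd_sum {ι : Type*} (i : Fin n) (s : Finset ι) {w : ι → EuclideanSpace ℝ (Fin n) → ℝ}
    (hw : ∀ j ∈ s, DifferentiableAt ℝ (w j) x) :
    pd i (fun y => ∑ j ∈ s, w j y) x = ∑ j ∈ s, pd i (w j) x := by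
  simp [pd, fderiv_fun_sum hw]

theorem grad_const_mul (c : ℝ) (u : EuclideanSpace ℝ (Fin n) → ℝ) :
    grad (fun y => c * u y) = fun y => c • grad u y := by
  ext y i
  simp [grad, pd_const_mul]

theorem grad_mul (hu : DifferentiableAt ℝ u x) (hv : DifferentiableAt ℝ v x) :
    grad (fun y => u y * v y) x = u x • grad v x + v x • grad u x := by
  ext i
  simp [grad, pd, fderiv_fun_mul hu hv]

theorem grad_exp (hu : DifferentiableAt ℝ u x) :
    grad (fun y => Real.exp (u y)) x = Real.exp (u x) • grad u x := by
  ext i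
  simp [grad, pd, fderiv_exp hu]

theorem differentiableAt_grad (hu : ContDiffAt ℝ 2 u x) : DifferentiableAt ℝ (grad u) x := by
  have hfderiv : DifferentiableAt ℝ (fderiv ℝ u) x :=
    (hu.fderiv_right (m := 1) (by norm_num)).differentiableAt (by norm_num)
  exact differentiableAt_pi.2 fun _ => hfderiv.clm_apply (differentiableAt_const _)

theorem divergence_congr (h : F =ᶠ[𝓝 x] G) : divergence F x = divergence G x := by
  refine Finset.sum_congr rfl fun i _ => ?_
  have hi : (fun y => F y i) =ᶠ[𝓝 x] fun y => G y i := h.mono fun y hy => congrFun hy i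
  rw [pd, pd, hi.fderiv_eq]

theorem divergence_add (hF : DifferentiableAt ℝ F x) (hG : DifferentiableAt ℝ G x) :
    divergence (fun y => F y + G y) x = divergence F x + divergence G x := by
  simp [divergence, pd, fderiv_fun_add (differentiableAt_pi.1 hF _) (differentiableAt_pi.1 hG _),
    Finset.sum_add_distrib]

theorem divergence_smul (hu : DifferentiableAt ℝ u x) (hF : DifferentiableAt ℝ F x) :
    divergence (fun y => u y • F y) x = u x * divergence F x + grad u x ⬝ᵥ F x := by
  simp [divergence, grad, dotProduct, pd, fderiv_fun_mul hu (differentiableAt_pi.1 hF _),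
    Finset.sum_add_distrib, Finset.mul_sum, mul_comm]

theorem hessInner_eq_divergence (D : Matrix (Fin n) (Fin n) ℝ)
    (hu : DifferentiableAt ℝ (grad u) x) :
    hessInner D u x = divergence (fun y => D *ᵥ grad u y) x := by
  have hterm (i j : Fin n) : DifferentiableAt ℝ (fun y => D i j * pd j u y) x :=
    (differentiableAt_pi.1 hu j).const_mul _
  refine Finset.sum_congr rfl fun i _ => ?_
  calc ∑ j, D i j * pd i (pd j u) x
      = ∑ j, pd i (fun y => D i j * pd j u y) x := by simp only [pd_const_mul]
    _ = pd i (fun y => ∑ j, D i j * pd j u y) x := (pd_sum i _ fun j _ => hterm i j).symm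

theorem hessInner_const_mul (D : Matrix (Fin n) (Fin n) ℝ) (c : ℝ)
    (u : EuclideanSpace ℝ (Fin n) → ℝ) (x : EuclideanSpace ℝ (Fin n)) :
    hessInner D (fun y => c * u y) x = c * hessInner D u x := by
  simp only [hessInner, pd_const_mul, Finset.mul_sum, mul_left_comm]

theorem hessInner_mul (D : Matrix (Fin n) (Fin n) ℝ)
    (hu : ContDiffAt ℝ 2 u x) (hv : ContDiffAt ℝ 2 v x) :
    hessInner D (fun y => u y * v y) x
      = u x * hessInner D v x + v x * hessInner D u x
        + (grad u x ⬝ᵥ D *ᵥ grad v x + grad v x ⬝ᵥ D *ᵥ grad u x) := by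
  have hdu : DifferentiableAt ℝ u x := hu.differentiableAt (by norm_num)
  have hdv : DifferentiableAt ℝ v x := hv.differentiableAt (by norm_num)
  have hDu := differentiableAt_mulVec D (differentiableAt_grad hu)
  have hDv := differentiableAt_mulVec D (differentiableAt_grad hv)
  have hgrad : (fun y => D *ᵥ grad (fun z => u z * v z) y)
      =ᶠ[𝓝 x] fun y => u y • D *ᵥ grad v y + v y • D *ᵥ grad u y := by
    filter_upwards [eventually_differentiableAt (hu.of_le one_le_two),
      eventually_differentiableAt (hv.of_le one_le_two)] with y hyu hyv
    rw [grad_mul hyu hyv, mulVec_add, mulVec_smul, mulVec_smul]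
  rw [hessInner_eq_divergence D (differentiableAt_grad (hu.mul hv)), divergence_congr hgrad,
    divergence_add (hdu.fun_smul hDv) (hdv.fun_smul hDu), divergence_smul hdu hDv,
    divergence_smul hdv hDu, ← hessInner_eq_divergence D (differentiableAt_grad hu),
    ← hessInner_eq_divergence D (differentiableAt_grad hv)]
  ring

theorem hessInner_exp (D : Matrix (Fin n) (Fin n) ℝ) (hu : ContDiffAt ℝ 2 u x) :
    hessInner D (fun y => Real.exp (u y)) x
      = Real.exp (u x) * (hessInner D u x + grad u x ⬝ᵥ D *ᵥ grad u x) := by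
  have hdu : DifferentiableAt ℝ u x := hu.differentiableAt (by norm_num)
  have hDu := differentiableAt_mulVec D (differentiableAt_grad hu)
  have hgrad : (fun y => D *ᵥ grad (fun z => Real.exp (u z)) y)
      =ᶠ[𝓝 x] fun y => Real.exp (u y) • D *ᵥ grad u y := by
    filter_upwards [eventually_differentiableAt (hu.of_le one_le_two)] with y hy
    rw [grad_exp hy, mulVec_smul]
  rw [hessInner_eq_divergence D (differentiableAt_grad hu.exp), divergence_congr hgrad,
    divergence_smul hdu.exp hDu, grad_exp hdu, smul_dotProduct, smul_eq_mul,
    ← hessInner_eq_divergence D (differentiableAt_grad hu), mul_add]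

theorem hopfCole_eq_mul_exp_const_mul {X : Type*} (ε : ℝ) (ψ ρ : X → ℝ) :
    hopfCole ε ψ ρ = fun z => ρ z * Real.exp (-(2 * ε)⁻¹ * ψ z) := by
  ext z
  rw [hopfCole, div_eq_inv_mul, mul_neg, neg_mul]

theorem differentiableAt_hopfCole {X : Type*} [NormedAddCommGroup X] [NormedSpace ℝ X] (ε : ℝ)
    {ψ ρ : X → ℝ} {z : X} (hψ : DifferentiableAt ℝ ψ z) (hρ : DifferentiableAt ℝ ρ z) :
    DifferentiableAt ℝ (hopfCole ε ψ ρ) z := by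
  rw [hopfCole_eq_mul_exp_const_mul]
  exact hρ.fun_mul (hψ.const_mul _).exp

theorem deriv_hopfCole (ε : ℝ) {ψ ρ : ℝ → ℝ} {t : ℝ}
    (hψ : DifferentiableAt ℝ ψ t) (hρ : DifferentiableAt ℝ ρ t) :
    deriv (hopfCole ε ψ ρ) t
      = Real.exp (-(2 * ε)⁻¹ * ψ t) * (deriv ρ t - (2 * ε)⁻¹ * ρ t * deriv ψ t) := by
  rw [hopfCole_eq_mul_exp_const_mul]
  exact (hρ.hasDerivAt.fun_mul (hψ.hasDerivAt.const_mul _).exp).deriv.trans (by ring)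

theorem grad_hopfCole (ε : ℝ) {ψ ρ : EuclideanSpace ℝ (Fin n) → ℝ}
    (hψ : DifferentiableAt ℝ ψ x) (hρ : DifferentiableAt ℝ ρ x) :
    grad (hopfCole ε ψ ρ) x
      = Real.exp (-(2 * ε)⁻¹ * ψ x) • (grad ρ x - ((2 * ε)⁻¹ * ρ x) • grad ψ x) := by
  have hcψ : DifferentiableAt ℝ (fun y => -(2 * ε)⁻¹ * ψ y) x := hψ.const_mul _
  rw [hopfCole_eq_mul_exp_const_mul, grad_mul hρ hcψ.exp, grad_exp hcψ, grad_const_mul]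
  module

theorem hessInner_hopfCole (ε : ℝ) (hD : D.IsSymm) {ψ ρ : EuclideanSpace ℝ (Fin n) → ℝ}
    (hψ : ContDiffAt ℝ 2 ψ x) (hρ : ContDiffAt ℝ 2 ρ x) :
    hessInner D (hopfCole ε ψ ρ) x
      = Real.exp (-(2 * ε)⁻¹ * ψ x) *
        (hessInner D ρ x - 2 * (2 * ε)⁻¹ * (grad ρ x ⬝ᵥ D *ᵥ grad ψ x)
          - (2 * ε)⁻¹ * (ρ x * hessInner D ψ x)
          + (2 * ε)⁻¹ ^ 2 * (ρ x * (grad ψ x ⬝ᵥ D *ᵥ grad ψ x))) := by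
  have hcψ : ContDiffAt ℝ 2 (fun y => -(2 * ε)⁻¹ * ψ y) x := contDiffAt_const.mul hψ
  rw [hopfCole_eq_mul_exp_const_mul, hessInner_mul D hρ hcψ.exp, hessInner_exp D hcψ,
    grad_exp (hcψ.differentiableAt (by norm_num)), hessInner_const_mul, grad_const_mul]
  simp only [mulVec_smul, dotProduct_smul, smul_dotProduct, smul_eq_mul]
  rw [dotProduct_mulVec_comm_of_isSymm hD (grad ψ x) (grad ρ x)]
  ring

theorem hopfCole_forward_kolmogorov_general {ε : ℝ} (hε : ε ≠ 0) (hD : D.IsSymm)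
    {f : EuclideanSpace ℝ (Fin n) → Fin n → ℝ} {ψ ρ : EuclideanSpace ℝ (Fin n) → ℝ → ℝ} {t : ℝ}
    (hf : DifferentiableAt ℝ f x)
    (hψx : ContDiffAt ℝ 2 (ψ · t) x) (hψt : DifferentiableAt ℝ (ψ x) t)
    (hρx : ContDiffAt ℝ 2 (ρ · t) x) (hρt : DifferentiableAt ℝ (ρ x) t)
    (hHJB : deriv (ψ x) t + (1 / 2) * (grad (ψ · t) x ⬝ᵥ D *ᵥ grad (ψ · t) x)
      + grad (ψ · t) x ⬝ᵥ f x = -ε * hessInner D (ψ · t) x)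
    (hFPK : deriv (ρ x) t + divergence (fun y => ρ y t • (f y + D *ᵥ grad (ψ · t) y)) x
      = ε * hessInner D (ρ · t) x) :
    deriv (hopfCole ε (ψ x) (ρ x)) t
      = -divergence (fun y => hopfCole ε (ψ · t) (ρ · t) y • f y) x
        + ε * hessInner D (hopfCole ε (ψ · t) (ρ · t)) x := by
  have hψd : DifferentiableAt ℝ (ψ · t) x := hψx.differentiableAt (by norm_num)
  have hρd : DifferentiableAt ℝ (ρ · t) x := hρx.differentiableAt (by norm_num)
  have hDψ := differentiableAt_mulVec D (differentiableAt_grad hψx)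
  rw [divergence_smul hρd (hf.fun_add hDψ), divergence_add hf hDψ, dotProduct_add,
    ← hessInner_eq_divergence D (differentiableAt_grad hψx)] at hFPK
  rw [deriv_hopfCole ε hψt hρt, divergence_smul (differentiableAt_hopfCole ε hψd hρd) hf,
    grad_hopfCole ε hψd hρd, hessInner_hopfCole ε hD hψx hρx,
    hopfCole_eq_mul_exp_const_mul]
  have hc : ε * (2 * ε)⁻¹ = 1 / 2 := by field_simp
  simp only [smul_dotProduct, sub_dotProduct, smul_eq_mul]
  linear_combination Real.exp (-(2 * ε)⁻¹ * ψ x t) *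
    (hFPK - (2 * ε)⁻¹ * ρ x t * hHJB
      + (2 * (grad (ρ · t) x ⬝ᵥ D *ᵥ grad (ψ · t) x) + 2 * ρ x t * hessInner D (ψ · t) x
        - (2 * ε)⁻¹ * ρ x t * (grad (ψ · t) x ⬝ᵥ D *ᵥ grad (ψ · t) x)) * hc)

end

/-- the Hopf–Cole transform `φ̂ = ρ · exp(−ψ/(2ε))` of a solution pair
`(ψ, ρ)` of the HJB / controlled Fokker–Planck system satisfies the forward
Kolmogorov (Fokker–Planck) equation of the uncontrolled dynamics. -/
theorem hopfCole_forward_kolmogorov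
    (n m : ℕ) (ε : ℝ) (hε : 0 < ε)
    (f : EuclideanSpace ℝ (Fin n) → ℝ → EuclideanSpace ℝ (Fin n))
    (hf : ∀ t, ContDiff ℝ 1 fun x => f x t)
    (B : ℝ → Matrix (Fin n) (Fin m) ℝ)
    (D : ℝ → Matrix (Fin n) (Fin n) ℝ)
    (hD : ∀ t, D t = B t * (B t)ᵀ)
    (ψ ρ : EuclideanSpace ℝ (Fin n) → ℝ → ℝ)
    (hψx : ∀ t, ContDiff ℝ 2 fun x => ψ x t)
    (hψt : ∀ x, ContDiff ℝ 1 fun t => ψ x t)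
    (hρx : ∀ t, ContDiff ℝ 2 fun x => ρ x t)
    (hρt : ∀ x, ContDiff ℝ 1 fun t => ρ x t)
    (hHJB : ∀ (x : EuclideanSpace ℝ (Fin n)) (t : ℝ),
      deriv (fun τ => ψ x τ) t
        + (1/2) * ∑ i, ∑ j, pd i (fun y => ψ y t) x * D t i j * pd j (fun y => ψ y t) x
        + ∑ i, pd i (fun y => ψ y t) x * f x t i
        = -ε * ∑ i, ∑ j, D t i j * pd i (fun y => pd j (fun z => ψ z t) y) x)
    (hFPK : ∀ (x : EuclideanSpace ℝ (Fin n)) (t : ℝ),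
      deriv (fun τ => ρ x τ) t
        + ∑ i, pd i (fun y => ρ y t *
            (f y t i + ∑ j, D t i j * pd j (fun z => ψ z t) y)) x
        = ε * ∑ i, ∑ j, D t i j * pd i (fun y => pd j (fun z => ρ z t) y) x)
    (φhat : EuclideanSpace ℝ (Fin n) → ℝ → ℝ)
    (hφhat : ∀ x t, φhat x t = ρ x t * Real.exp (-(ψ x t) / (2 * ε))) :
    ∀ (x : EuclideanSpace ℝ (Fin n)) (t : ℝ),
      deriv (fun τ => φhat x τ) t
        = -(∑ i, pd i (fun y => φhat y t * f y t i) x)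
          + ε * ∑ i, ∑ j, D t i j * pd i (fun y => pd j (fun z => φhat z t) y) x := by
  obtain rfl : φhat = fun x t => hopfCole ε (ψ x) (ρ x) t := funext₂ hφhat
  intro x t
  have hfx : DifferentiableAt ℝ (fun y => (f y t).ofLp) x :=
    differentiableAt_pi.2 (differentiableAt_euclidean.1 ((hf t).differentiable one_ne_zero x))
  exact hopfCole_forward_kolmogorov_general hε.ne' (hD t ▸ isSymm_mul_transpose (B t)) hfx
    (hψx t).contDiffAt ((hψt x).differentiable one_ne_zero t)
    (hρx t).contDiffAt ((hρt x).differentiable one_ne_zero t)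
    (by rw [Matrix.dot_mulVec_eq_sum_sum, Finset.sum_comm]; exact hHJB x t) (hFPK x t)
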